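/- arXiv:2001.04683 — 5 statements merged into one kernel-verified Lean document; each statement's English description precedes it below -/
import Mathlib

section
/- Let V be a finite type with at least 3 elements and let x, y, z, w be Hamiltonian cycles on V. Suppose that the characteristic vectors satisfy χ_z + χ_w = χ_x + χ_y (pointwise on Sym2 V) and that the unordered pair {z, w} is different from the unordered pair {x, y}. Then the closed segment joining χ_x and χ_y is NOT an extreme subset of the polytope TSP(V); in particular χ_x and χ_y are not adjacent vertices in the 1-skeleton of TSP(V). -/
open scoped Classical

/-- The characteristic vector of a simple graph `H` on `V`, as a function `Sym2 V → ℝ`. -/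
noncomputable def chiGraph {V : Type*} (H : SimpleGraph V) : Sym2 V → ℝ :=
  fun e => if e ∈ H.edgeSet then 1 else 0

/-- A Hamiltonian cycle on `V`: a connected simple graph in which every vertex has degree 2. -/
def IsHamiltonianCycleGraph {V : Type*} [Fintype V] (H : SimpleGraph V) : Prop :=
  H.Connected ∧ ∀ v : V, H.degree v = 2

/-- The symmetric traveling salesperson polytope: the convex hull of the characteristic
vectors of all Hamiltonian cycles on `V`. -/
noncomputable def TSPpolytope (V : Type*) [Fintype V] : Set (Sym2 V → ℝ) :=
  convexHull ℝ {f | ∃ H : SimpleGraph V, IsHamiltonianCycleGraph H ∧ f = chiGraph H}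

theorem chiGraph_inj {V : Type*} {G H : SimpleGraph V} (h : chiGraph G = chiGraph H) : G = H := by
  rw [← SimpleGraph.edgeSet_inj]
  ext e
  have he := congrFun h e
  unfold chiGraph at he
  by_cases h1 : e ∈ G.edgeSet <;> by_cases h2 : e ∈ H.edgeSet <;> simp_all

theorem chiGraph_segment {V : Type*} {x y z : SimpleGraph V}
    (h : chiGraph z ∈ segment ℝ (chiGraph x) (chiGraph y)) : z = x ∨ z = y := by
  obtain ⟨a, b, ha, hb, hab, h⟩ := h
  rcases ha.eq_or_lt with ha0 | ha0
  · right
    apply chiGraph_inj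
    have hb1 : b = 1 := by linarith
    rw [← h, ← ha0, hb1]
    simp
  · rcases hb.eq_or_lt with hb0 | hb0
    · left
      apply chiGraph_inj
      have ha1 : a = 1 := by linarith
      rw [← h, ← hb0, ha1]
      simp
    · left
      apply chiGraph_inj
      funext e
      have he := congrFun h e
      simp only [Pi.add_apply, Pi.smul_apply, smul_eq_mul, chiGraph] at he ⊢
      split_ifs at he ⊢ <;> linarith

theorem stmt_0 {V : Type*} [Fintype V] (hV : 3 ≤ Fintype.card V)
    (x y z w : SimpleGraph V)
    (hx : IsHamiltonianCycleGraph x) (hy : IsHamiltonianCycleGraph y)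
    (hz : IsHamiltonianCycleGraph z) (hw : IsHamiltonianCycleGraph w)
    (hsum : chiGraph z + chiGraph w = chiGraph x + chiGraph y)
    (hdiff : ¬ ((z = x ∧ w = y) ∨ (z = y ∧ w = x))) :
    ¬ IsExtreme ℝ (TSPpolytope V) (segment ℝ (chiGraph x) (chiGraph y)) := by
  intro hE
  have mem : ∀ H : SimpleGraph V, IsHamiltonianCycleGraph H → chiGraph H ∈ TSPpolytope V :=
    fun H hH => subset_convexHull ℝ _ ⟨H, hH, rfl⟩
  have hm : (1/2 : ℝ) • chiGraph x + (1/2 : ℝ) • chiGraph y ∈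
      segment ℝ (chiGraph x) (chiGraph y) :=
    ⟨1/2, 1/2, by norm_num, by norm_num, by norm_num, rfl⟩
  have ho : (1/2 : ℝ) • chiGraph x + (1/2 : ℝ) • chiGraph y ∈
      openSegment ℝ (chiGraph z) (chiGraph w) :=
    ⟨1/2, 1/2, by norm_num, by norm_num, by norm_num, by rw [← smul_add, hsum, smul_add]⟩
  rcases chiGraph_segment (hE.left_mem_of_mem_openSegment (mem z hz) (mem w hw) hm ho) with h | h
  · subst h
    exact hdiff (Or.inl ⟨rfl, chiGraph_inj (add_left_cancel hsum)⟩)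
  · subst h
    rw [add_comm (chiGraph x)] at hsum
    exact hdiff (Or.inr ⟨rfl, chiGraph_inj (add_left_cancel hsum)⟩)
end

section
/- Let V be a finite type with at least 3 elements and let σ, τ, π, ρ be cyclic permutations of V. Suppose that the characteristic vectors satisfy χ_π + χ_ρ = χ_σ + χ_τ (pointwise on V × V) and that the unordered pair {π, ρ} is different from the unordered pair {σ, τ}. Then the closed segment joining χ_σ and χ_τ is NOT an extreme subset of the polytope ATSP(V); in particular χ_σ and χ_τ are not adjacent vertices in the 1-skeleton of ATSP(V). -/
open scoped Classical

/-- The characteristic vector of a permutation `σ` of `V`, as a function `V × V → ℝ`. -/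
noncomputable def chiPerm {V : Type*} (σ : Equiv.Perm V) : V × V → ℝ :=
  fun p => if σ p.1 = p.2 then 1 else 0

/-- A cyclic permutation of `V`: a permutation that is a single cycle whose support
is all of `V`. -/
def IsCyclicPerm {V : Type*} [Fintype V] [DecidableEq V] (σ : Equiv.Perm V) : Prop :=
  σ.IsCycle ∧ σ.support = Finset.univ

/-- The asymmetric traveling salesperson polytope: the convex hull of the characteristic
vectors of all cyclic permutations of `V`. -/
noncomputable def ATSPpolytope (V : Type*) [Fintype V] [DecidableEq V] : Set (V × V → ℝ) :=
  convexHull ℝ {f | ∃ σ : Equiv.Perm V, IsCyclicPerm σ ∧ f = chiPerm σ}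

theorem chiPerm_inj_aux {V : Type*} {α β : Equiv.Perm V} (h : chiPerm α = chiPerm β) : α = β := by
  ext v
  have := congrFun h (v, β v)
  simp only [chiPerm, if_true] at this
  by_contra hc
  simp [hc] at this

theorem stmt_1 {V : Type*} [Fintype V] [DecidableEq V] (hV : 3 ≤ Fintype.card V)
    (σ τ π ρ : Equiv.Perm V)
    (hσ : IsCyclicPerm σ) (hτ : IsCyclicPerm τ)
    (hπ : IsCyclicPerm π) (hρ : IsCyclicPerm ρ)
    (hsum : chiPerm π + chiPerm ρ = chiPerm σ + chiPerm τ)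
    (hdiff : ¬ ((π = σ ∧ ρ = τ) ∨ (π = τ ∧ ρ = σ))) :
    ¬ IsExtreme ℝ (ATSPpolytope V) (segment ℝ (chiPerm σ) (chiPerm τ)) := by
  intro hE
  have memP : ∀ α : Equiv.Perm V, IsCyclicPerm α → chiPerm α ∈ ATSPpolytope V :=
    fun α h => subset_convexHull ℝ _ ⟨α, h, rfl⟩
  have hm : (1/2 : ℝ) • chiPerm σ + (1/2 : ℝ) • chiPerm τ ∈ segment ℝ (chiPerm σ) (chiPerm τ) :=
    ⟨1/2, 1/2, by norm_num, by norm_num, by norm_num, rfl⟩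
  have ho : (1/2 : ℝ) • chiPerm σ + (1/2 : ℝ) • chiPerm τ ∈
      openSegment ℝ (chiPerm π) (chiPerm ρ) :=
    ⟨1/2, 1/2, by norm_num, by norm_num, by norm_num, by
      rw [← smul_add, ← smul_add, hsum]⟩
  have hmem := hE.left_mem_of_mem_openSegment (memP π hπ) (memP ρ hρ) hm ho
  obtain ⟨a, b, ha, hb, hab, h⟩ := hmem
  have key : π = σ ∨ π = τ := by
    rcases ha.eq_or_lt with h0 | h0
    · right
      subst h0
      have hb1 : b = 1 := by linarith
      subst hb1
      apply chiPerm_inj_aux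
      rw [← h]; simp
    · left
      ext v
      have h1 := congrFun h (v, σ v)
      by_contra hc
      simp only [chiPerm, Pi.add_apply, Pi.smul_apply, smul_eq_mul, if_true, if_neg hc] at h1
      split_ifs at h1 <;> linarith
  apply hdiff
  rcases key with rfl | rfl
  · exact Or.inl ⟨rfl, chiPerm_inj_aux (add_left_cancel hsum)⟩
  · refine Or.inr ⟨rfl, chiPerm_inj_aux ?_⟩
    rw [add_comm (chiPerm σ)] at hsum
    exact add_left_cancel hsum
end

section
/- Let V be a finite type and let σ, τ, π be permutations of V such that for every v, π(v) = σ(v) or π(v) = τ(v). Define ρ : V → V by ρ(v) = τ(v) if π(v) = σ(v), and ρ(v) = σ(v) otherwise. Then ρ is a bijection (a permutation of V), and the characteristic vectors satisfy χ_σ + χ_τ = χ_π + χ_ρ. In other words, removing a vertex-disjoint directed cycle cover from the union multigraph of two directed cycle covers leaves another vertex-disjoint directed cycle cover. -/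
open scoped Classical

/-- The characteristic vector of a map `f : V → V`, as a function `V × V → ℝ`:
value 1 on the pair `(u, v)` iff `f u = v`. -/
noncomputable def chiMap {V : Type*} (f : V → V) : V × V → ℝ :=
  fun p => if f p.1 = p.2 then 1 else 0

theorem stmt_7 {V : Type*} [Fintype V] (σ τ π : Equiv.Perm V)
    (hπ : ∀ v : V, π v = σ v ∨ π v = τ v) :
    Function.Bijective (fun v : V => if π v = σ v then τ v else σ v) ∧
    chiMap ⇑σ + chiMap ⇑τ =
      chiMap ⇑π + chiMap (fun v : V => if π v = σ v then τ v else σ v) := by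
  constructor
  · apply Function.Surjective.bijective_of_finite
    intro w
    obtain ⟨a, ha⟩ := σ.surjective w
    obtain ⟨b, hb⟩ := τ.surjective w
    by_cases h : π a = w
    · refine ⟨b, ?_⟩
      by_cases hab : b = a
      · subst hab
        simp [h, ha, hb]
      · have h1 : π b ≠ τ b := fun h2 => hab (π.injective (h2.trans (hb.trans h.symm)))
        have h3 : π b = σ b := (hπ b).resolve_right h1
        simp [h3, hb]
    · refine ⟨a, ?_⟩
      simp [ha, h]
  · funext p
    simp only [Pi.add_apply, chiMap]
    by_cases h : π p.1 = σ p.1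
    · simp [h]
    · have h3 := (hπ p.1).resolve_left h
      simp only [h, if_false]
      rw [h3, add_comm]
end

section
/- Let V be a finite type and let r : V → V → Prop be an arbitrary relation (the arc relation of a directed multigraph on V). Let B be the simple graph on the sum type V ⊕ V in which inl(u) is adjacent to inr(v) if and only if r u v holds, and there are no other adjacencies. Then a subgraph M of B is a perfect matching of B if and only if there exists a permutation σ of V such that r v (σ v) holds for every v and the edge set of M is exactly { s(inl v, inr (σ v)) : v ∈ V }. In particular, perfect matchings of B correspond exactly to vertex-disjoint directed cycle covers of the directed graph (V, r). -/
/-- The bipartite simple graph on `V ⊕ V` associated with a relation `r : V → V → Prop`: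
`Sum.inl u` is adjacent to `Sum.inr v` iff `r u v`, and there are no other adjacencies. -/
def bipartiteOfRel {V : Type*} (r : V → V → Prop) : SimpleGraph (V ⊕ V) :=
  SimpleGraph.fromRel (fun a b => ∃ u v : V, a = Sum.inl u ∧ b = Sum.inr v ∧ r u v)

theorem stmt_8 {V : Type*} [Fintype V] (r : V → V → Prop)
    (M : (bipartiteOfRel r).Subgraph) :
    M.IsPerfectMatching ↔
      ∃ σ : Equiv.Perm V, (∀ v : V, r v (σ v)) ∧
        M.edgeSet = {e : Sym2 (V ⊕ V) | ∃ v : V, e = s(Sum.inl v, Sum.inr (σ v))} := by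
  have hll : ∀ u v : V, ¬ M.Adj (Sum.inl u) (Sum.inl v) := by
    intro u v h
    have := M.adj_sub h
    simp [bipartiteOfRel] at this
  have hrr : ∀ u v : V, ¬ M.Adj (Sum.inr u) (Sum.inr v) := by
    intro u v h
    have := M.adj_sub h
    simp [bipartiteOfRel] at this
  have hlr : ∀ u v : V, M.Adj (Sum.inl u) (Sum.inr v) → r u v := by
    intro u v h
    have := M.adj_sub h
    simpa [bipartiteOfRel] using this
  rw [SimpleGraph.Subgraph.isPerfectMatching_iff]
  constructor
  · intro h
    have h1 : ∀ u : V, ∃ v : V, M.Adj (Sum.inl u) (Sum.inr v) := by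
      intro u
      obtain ⟨w, hw, -⟩ := h (Sum.inl u)
      rcases w with w | w
      · exact absurd hw (hll _ _)
      · exact ⟨w, hw⟩
    have h2 : ∀ u : V, ∃ v : V, M.Adj (Sum.inl v) (Sum.inr u) := by
      intro u
      obtain ⟨w, hw, -⟩ := h (Sum.inr u)
      rcases w with w | w
      · exact ⟨w, hw.symm⟩
      · exact absurd hw (hrr _ _)
    choose f hf using h1
    choose g hg using h2
    have hfu : ∀ u v, M.Adj (Sum.inl u) (Sum.inr v) → v = f u := fun u v huv =>
      Sum.inr_injective ((h (Sum.inl u)).unique huv (hf u))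
    have hgu : ∀ u v, M.Adj (Sum.inl u) (Sum.inr v) → u = g v := fun u v huv =>
      Sum.inl_injective ((h (Sum.inr v)).unique huv.symm (hg v).symm)
    refine ⟨⟨f, g, fun u => (hgu _ _ (hf u)).symm, fun v => (hfu _ _ (hg v)).symm⟩,
      fun v => hlr _ _ (hf v), ?_⟩
    ext e
    induction e with
    | _ a b =>
      simp only [SimpleGraph.Subgraph.mem_edgeSet, Set.mem_setOf_eq, Equiv.coe_fn_mk]
      constructor
      · intro hab
        rcases a with a | a <;> rcases b with b | b
        · exact absurd hab (hll _ _)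
        · exact ⟨a, by rw [hfu _ _ hab]⟩
        · exact ⟨b, by rw [hfu _ _ hab.symm, Sym2.eq_swap]⟩
        · exact absurd hab (hrr _ _)
      · rintro ⟨v, hv⟩
        rw [← SimpleGraph.Subgraph.mem_edgeSet, hv]
        exact hf v
  · rintro ⟨σ, -, hM⟩
    have key : ∀ u v, M.Adj (Sum.inl u) (Sum.inr v) ↔ v = σ u := by
      intro u v
      rw [← SimpleGraph.Subgraph.mem_edgeSet, hM]
      simp
    rintro (u | v)
    · refine ⟨Sum.inr (σ u), (key _ _).2 rfl, ?_⟩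
      rintro (w | w) hw
      · exact absurd hw (hll _ _)
      · rw [(key _ _).1 hw]
    · refine ⟨Sum.inl (σ.symm v), ((key _ _).2 (by simp)).symm, ?_⟩
      rintro (w | w) hw
      · rw [(key _ _).1 hw.symm]; simp
      · exact absurd hw (hrr _ _)
end

section
/- Let V be a finite type with at least 3 elements and let H be a simple graph on V. Then H is connected and every vertex of V has degree 2 in H if and only if H contains a Hamiltonian cycle c (a closed walk visiting every vertex exactly once) whose set of edges is exactly the edge set of H. -/
open scoped Classical

theorem stmt_10 {V : Type*} [Fintype V] (hV : 3 ≤ Fintype.card V) (H : SimpleGraph V) :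
    (H.Connected ∧ ∀ v : V, H.degree v = 2) ↔
      ∃ (v : V) (c : H.Walk v v), c.IsHamiltonianCycle ∧
        {e : Sym2 V | e ∈ c.edges} = H.edgeSet := by
  have hdeg : ∀ v, (H.neighborSet v).ncard = H.degree v := fun v => by
    rw [← SimpleGraph.card_neighborSet_eq_degree, Set.ncard_eq_toFinset_card', Set.toFinset_card]
  constructor
  · rintro ⟨hc, hd⟩
    obtain ⟨v⟩ := hc.nonempty
    have hcyc : H.IsCycles := fun v _ => by rw [hdeg, hd]
    have hn : (H.neighborSet v).Nonempty :=
      Set.nonempty_of_ncard_ne_zero (by rw [hdeg, hd]; decide)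
    obtain ⟨p, hp, hs⟩ := hcyc.exists_cycle_toSubgraph_verts_eq_connectedComponentSupp
      (c := H.connectedComponentMk v) (v := v) rfl hn
    have hall : ∀ w, w ∈ p.toSubgraph.verts := fun w => by
      rw [hs, SimpleGraph.ConnectedComponent.mem_supp_iff, SimpleGraph.ConnectedComponent.eq]
      exact hc.preconnected w v
    refine ⟨v, p, ⟨hp, ?_⟩, ?_⟩
    · refine hp.isPath_tail.isHamiltonian_of_mem fun w => ?_
      rw [SimpleGraph.Walk.support_tail_of_not_nil p hp.not_nil]
      have hw := p.mem_verts_toSubgraph.1 (hall w)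
      rw [SimpleGraph.Walk.mem_support_iff] at hw
      rcases hw with rfl | hw
      · exact SimpleGraph.Walk.end_mem_tail_support hp.not_nil
      · exact hw
    · ext e
      induction e with
      | _ a b =>
        have := hp.adj_toSubgraph_iff_of_isCycles hcyc (hall a) b
        rw [SimpleGraph.Walk.adj_toSubgraph_iff_mem_edges] at this
        simpa using this
  · rintro ⟨v, c, hc, he⟩
    refine ⟨?_, fun w => ?_⟩
    · haveI : Nonempty V := ⟨v⟩
      refine ⟨fun a b => ?_⟩
      have h : ∀ a, H.Reachable v a := fun a => ⟨c.takeUntil a (hc.mem_support a)⟩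
      exact (h a).symm.trans (h b)
    · rw [← hdeg, ← hc.isCycle.ncard_neighborSet_toSubgraph_eq_two (hc.mem_support w)]
      congr 1
      ext x
      rw [SimpleGraph.Subgraph.mem_neighborSet, SimpleGraph.Walk.adj_toSubgraph_iff_mem_edges,
        SimpleGraph.mem_neighborSet, ← SimpleGraph.mem_edgeSet, ← he]
      rfl
end
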